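/- arXiv:1706.09134 — 3 statements merged into one kernel-verified Lean document; each statement's English description precedes it below -/
import Mathlib

section
/- The rational function 1/(x+y) ∈ k(x,y) is not exact with respect to (Δ_x, D_y): there do not exist g, h ∈ k(x,y) with 1/(x+y) = Δ_x(g) + D_y(h). -/
/-!
The proof is a residue argument. Put `K = k(x)` and let `Fexpand : K(y) → K((t))` be the Laurent
expansion at the point `y = -x`, that is `y ↦ t - x`. For a rational function `f` and `n : ℤ` let
`r n f` be the coefficient of `t⁻¹` in the expansion of `σⁿ f`.

* `r n (D h) = 0`: the automorphism `σⁿ` commutes with `D`, and a derivative has no residue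
  (`coeff_expand_deriv`).
* `r n (σ g) = r (n + 1) g` by definition.
* `r n g = 0` for all but finitely many `n`: if `q` is a denominator of `g`, then `σⁿ g` is regular
  at `y = -x` unless `q` vanishes at `y = n - x`, and `q` has finitely many roots in `K`
  (`finite_residue_support`).
* `r n (1/(x+y))`, the residue of `1/(x+n+y)` at `y = -x`, is `1` for `n = 0` and `0` otherwise.

Thus `1/(x+y) = (σ g - g) + D h` would give `δ_{n,0} = r (n + 1) g - r n g` for all `n`; summed over
`n : ℤ`, the left-hand side gives `1` and the right-hand side `0`.
-/

open Polynomial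

noncomputable section

variable (k : Type*) [Field k] [CharZero k]

/-- `k(x,y)` realized as `k(x)(y)`: rational functions in `y` over `k(x) = RatFunc k`. -/
abbrev F2 := RatFunc (RatFunc k)

/-- The element `x` of `k(x,y)`. -/
def Fx : F2 k := RatFunc.C RatFunc.X

/-- The element `y` of `k(x,y)`. -/
def Fy : F2 k := RatFunc.X

/-- The embedding of the constants `k` into `k(x,y)`. -/
def Fc : k →+* F2 k := RatFunc.C.comp RatFunc.C

/-- The embedding of `k(x)` into `k(x,y)`. -/
def FKx : RatFunc k →+* F2 k := RatFunc.C

/-- The embedding of `k(x)[y]` into `k(x,y)`. -/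
def FP : Polynomial (RatFunc k) →+* F2 k := algebraMap _ _

/-- The embedding of `k[x,y]` (realized as `(k[x])[y]`, outer variable `y`) into `k(x)[y]`. -/
def PP : Polynomial (Polynomial k) →+* Polynomial (RatFunc k) :=
  Polynomial.mapRingHom (algebraMap (Polynomial k) (RatFunc k))

/-- The embedding of `k[y]` into `k[x,y] = (k[x])[y]`. -/
def PY : Polynomial k →+* Polynomial (Polynomial k) :=
  Polynomial.mapRingHom Polynomial.C

/-- The embedding of `k[x,y]` into `k(x,y)`. -/
def FPP : Polynomial (Polynomial k) →+* F2 k := (FP k).comp (PP k)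

/-- The embedding of `k[y]` into `k(x)[y]`. -/
def PYx : Polynomial k →+* Polynomial (RatFunc k) :=
  Polynomial.mapRingHom (algebraMap k (RatFunc k))

variable {k}

/-- `σ` is the shift operator `σ_x : f(x,y) ↦ f(x+1,y)`, i.e. the automorphism of
`k(x,y)` fixing `k(y)` pointwise (equivalently, fixing the generators `k` and `y`)
and sending `x` to `x+1`. -/
def IsShiftX (σ : F2 k ≃+* F2 k) : Prop :=
  (∀ c : k, σ (Fc k c) = Fc k c) ∧ σ (Fy k) = Fy k ∧ σ (Fx k) = Fx k + 1

/-- `σ` is the `q`-shift operator `τ_{x,q} : f(x,y) ↦ f(qx,y)`, i.e. the automorphism of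
`k(x,y)` fixing `k(y)` pointwise and sending `x` to `q·x`. -/
def IsQShiftX (q : k) (σ : F2 k ≃+* F2 k) : Prop :=
  (∀ c : k, σ (Fc k c) = Fc k c) ∧ σ (Fy k) = Fy k ∧ σ (Fx k) = Fc k q * Fx k

/-- `σ` is the shift operator `σ_y : f(x,y) ↦ f(x,y+1)`, i.e. the automorphism of
`k(x,y)` fixing `k(x)` pointwise and sending `y` to `y+1`. -/
def IsShiftY (σ : F2 k ≃+* F2 k) : Prop :=
  (∀ c : k, σ (Fc k c) = Fc k c) ∧ σ (Fx k) = Fx k ∧ σ (Fy k) = Fy k + 1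

/-- `D` is the partial derivation `D_y = ∂/∂y` on `k(x,y)`: the `k(x)`-linear derivation
with `D(y) = 1`. -/
def IsDerivY (D : F2 k → F2 k) : Prop :=
  (∀ a b, D (a + b) = D a + D b) ∧ (∀ a b, D (a * b) = a * D b + D a * b) ∧
  (∀ c : RatFunc k, D (FKx k c) = 0) ∧ D (Fy k) = 1

/-- `q` is not a root of unity. -/
def NotRootOfUnity (q : k) : Prop := ∀ n : ℕ, 0 < n → q ^ n ≠ 1

/-! ### Generation of a rational function field, and uniqueness of derivations -/

theorem mem_subfield_of_gen {L : Type*} [Field L] (S : Subfield (RatFunc L))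
    (hC : ∀ c : L, RatFunc.C c ∈ S) (hX : RatFunc.X ∈ S) (f : RatFunc L) : f ∈ S := by
  have hpoly : ∀ p : L[X], algebraMap L[X] (RatFunc L) p ∈ S := by
    intro p
    induction p using Polynomial.induction_on' with
    | add p q hp hq => rw [map_add]; exact S.add_mem hp hq
    | monomial n a =>
      rw [← Polynomial.C_mul_X_pow_eq_monomial, map_mul, map_pow, RatFunc.algebraMap_C,
        RatFunc.algebraMap_X]
      exact S.mul_mem (hC a) (S.pow_mem hX n)
  induction f using RatFunc.induction_on with
  | f p q _ => exact S.div_mem (hpoly p) (hpoly q)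

/-- Two derivations along a ring homomorphism `φ` out of `L(X)` agree as soon as they agree on the
constants and on `X`. -/
theorem twisted_deriv_ext {L M : Type*} [Field L] [Field M] (φ : RatFunc L →+* M)
    (α β : RatFunc L → M)
    (hα : ∀ a b, α (a + b) = α a + α b) (hα' : ∀ a b, α (a * b) = φ a * α b + α a * φ b)
    (hβ : ∀ a b, β (a + b) = β a + β b) (hβ' : ∀ a b, β (a * b) = φ a * β b + β a * φ b)
    (hC : ∀ c, α (RatFunc.C c) = β (RatFunc.C c)) (hX : α RatFunc.X = β RatFunc.X)
    (f : RatFunc L) : α f = β f := by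
  have h1 : α 1 = β 1 := by simpa using hC 1
  have h0 : α 0 = β 0 := by simpa using hC 0
  let S : Subfield (RatFunc L) :=
    { carrier := {f | α f = β f}
      mul_mem' := by
        intro a b (ha : α a = β a) (hb : α b = β b)
        change α (a * b) = β (a * b)
        rw [hα', hβ', ha, hb]
      one_mem' := h1
      add_mem' := by
        intro a b (ha : α a = β a) (hb : α b = β b)
        change α (a + b) = β (a + b)
        rw [hα, hβ, ha, hb]
      zero_mem' := h0
      neg_mem' := by
        intro a (ha : α a = β a)
        change α (-a) = β (-a)
        have e1 := hα a (-a)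
        have e2 := hβ a (-a)
        rw [add_neg_cancel] at e1 e2
        rw [h0, e2, ha] at e1
        exact (add_left_cancel e1).symm
      inv_mem' := by
        intro a (ha : α a = β a)
        change α a⁻¹ = β a⁻¹
        rcases eq_or_ne a 0 with rfl | hne
        · simpa using h0
        have e1 := hα' a a⁻¹
        have e2 := hβ' a a⁻¹
        rw [mul_inv_cancel₀ hne] at e1 e2
        rw [h1, e2, ha] at e1
        exact (mul_left_cancel₀ ((map_ne_zero φ).2 hne) (add_right_cancel e1)).symm }
  exact mem_subfield_of_gen S hC hX f

/-! ### The Euler operator on Laurent series -/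

/-- The Euler operator `t · d/dt` on Laurent series: it multiplies the `n`-th coefficient by `n`. -/
def euler {K : Type*} [Field K] (f : LaurentSeries K) : LaurentSeries K where
  coeff n := (n : K) * f.coeff n
  isPWO_support' := f.isPWO_support.mono (by
    intro n hn h
    exact hn (by simp [h]))

theorem euler_coeff {K : Type*} [Field K] (f : LaurentSeries K) (n : ℤ) :
    (euler f).coeff n = (n : K) * f.coeff n := rfl

theorem euler_support {K : Type*} [Field K] (f : LaurentSeries K) :
    (euler f).support ⊆ f.support := by
  intro n hn h
  exact hn (by simp [euler_coeff, h])

theorem euler_add {K : Type*} [Field K] (f g : LaurentSeries K) :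
    euler (f + g) = euler f + euler g := by
  ext n
  simp [euler_coeff, mul_add]

theorem euler_mul {K : Type*} [Field K] (f g : LaurentSeries K) :
    euler (f * g) = f * euler g + euler f * g := by
  ext n
  rw [HahnSeries.coeff_add, HahnSeries.coeff_mul_left' f.isPWO_support (euler_support f),
    HahnSeries.coeff_mul_right' g.isPWO_support (euler_support g), euler_coeff,
    HahnSeries.coeff_mul, ← Finset.sum_add_distrib, Finset.mul_sum]
  refine Finset.sum_congr rfl fun ij hij => ?_
  rw [Finset.mem_antidiagonal] at hij
  rw [euler_coeff, euler_coeff, ← hij.2.2]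
  push_cast
  ring

theorem euler_single {K : Type*} [Field K] (n : ℤ) (c : K) :
    euler (HahnSeries.single n c) = HahnSeries.single n ((n : K) * c) := by
  ext m
  rw [euler_coeff]
  rcases eq_or_ne m n with rfl | h
  · simp
  · simp [HahnSeries.coeff_single_of_ne h]

/-! ### Laurent expansion at `y = -x` -/

section Expansion

variable {k : Type*} [Field k]

/-- The expansion of a polynomial in `y` at the point `y = -x`, as a power series in `t = y + x`. -/
def FexpandPoly : (RatFunc k)[X] →+* PowerSeries (RatFunc k) :=
  (Polynomial.coeToPowerSeries.ringHom).comp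
    (Polynomial.taylorAlgHom (-RatFunc.X : RatFunc k)).toRingHom

theorem FexpandPoly_apply (p : (RatFunc k)[X]) :
    FexpandPoly p = (Polynomial.taylor (-RatFunc.X : RatFunc k) p : PowerSeries (RatFunc k)) := rfl

theorem FexpandPoly_injective : Function.Injective (FexpandPoly (k := k)) := by
  intro p q h
  rw [FexpandPoly_apply, FexpandPoly_apply] at h
  exact Polynomial.taylor_injective _ (Polynomial.coe_injective _ h)

theorem constantCoeff_FexpandPoly (p : (RatFunc k)[X]) :
    PowerSeries.constantCoeff (FexpandPoly p) = p.eval (-RatFunc.X) := by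
  rw [FexpandPoly_apply, ← PowerSeries.coeff_zero_eq_constantCoeff_apply, Polynomial.coeff_coe,
    Polynomial.taylor_coeff_zero]

theorem Fexpand_aux_injective : Function.Injective
    ((HahnSeries.ofPowerSeries ℤ (RatFunc k)).comp (FexpandPoly (k := k))) :=
  HahnSeries.ofPowerSeries_injective.comp FexpandPoly_injective

/-- The Laurent expansion of a rational function in `y` over `k(x)` at the point `y = -x`, in the
local parameter `t = y + x`. -/
def Fexpand : F2 k →+* LaurentSeries (RatFunc k) :=
  IsFractionRing.lift (A := (RatFunc k)[X]) Fexpand_aux_injective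

theorem Fexpand_algebraMap (p : (RatFunc k)[X]) :
    Fexpand (algebraMap _ (F2 k) p) = HahnSeries.ofPowerSeries ℤ (RatFunc k) (FexpandPoly p) :=
  IsFractionRing.lift_algebraMap Fexpand_aux_injective p

theorem Fexpand_C (c : RatFunc k) : Fexpand (RatFunc.C c) = HahnSeries.single 0 c := by
  rw [← RatFunc.algebraMap_C, Fexpand_algebraMap, FexpandPoly_apply, Polynomial.taylor_C,
    Polynomial.coe_C, HahnSeries.ofPowerSeries_C, HahnSeries.C_apply]

theorem Fexpand_Fy :
    Fexpand (Fy k) = HahnSeries.single 1 1 + HahnSeries.single 0 (-RatFunc.X : RatFunc k) := by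
  rw [Fy, ← RatFunc.algebraMap_X, Fexpand_algebraMap, FexpandPoly_apply, Polynomial.taylor_X,
    Polynomial.coe_add, Polynomial.coe_C, Polynomial.coe_X, map_add, HahnSeries.ofPowerSeries_C,
    HahnSeries.ofPowerSeries_X, HahnSeries.C_apply]

theorem Fexpand_Fx_add_Fy : Fexpand (Fx k + Fy k) = HahnSeries.single 1 1 := by
  rw [map_add, Fexpand_Fy, Fx, Fexpand_C, add_left_comm, ← HahnSeries.single_add]
  simp

theorem coeff_expand_div (p q : (RatFunc k)[X]) (hq : q.eval (-RatFunc.X) ≠ 0) :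
    (Fexpand (algebraMap _ (F2 k) p / algebraMap _ (F2 k) q)).coeff (-1) = 0 := by
  have hunit : FexpandPoly q * (FexpandPoly q)⁻¹ = 1 :=
    PowerSeries.mul_inv_cancel _ (by rwa [constantCoeff_FexpandPoly])
  have h : Fexpand (algebraMap _ (F2 k) p / algebraMap _ (F2 k) q) =
      HahnSeries.ofPowerSeries ℤ (RatFunc k) (FexpandPoly p * (FexpandPoly q)⁻¹) := by
    have h1 := congrArg (HahnSeries.ofPowerSeries ℤ (RatFunc k)) hunit
    rw [map_mul, map_one] at h1
    rw [map_div₀, Fexpand_algebraMap, Fexpand_algebraMap, map_mul, div_eq_mul_inv,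
      inv_eq_of_mul_eq_one_right h1]
  rw [h, PowerSeries.coeff_coe]
  simp

/-- A derivative in `y` has residue zero at `y = -x`: expansion turns `(x + y) · ∂/∂y` into the
Euler operator, whose values have no constant term. -/
theorem coeff_expand_deriv (D : F2 k → F2 k) (hD : IsDerivY D) (h : F2 k) :
    (Fexpand (D h)).coeff (-1) = 0 := by
  obtain ⟨hadd, hmul, hc, hy⟩ := hD
  have key : euler (Fexpand h) = Fexpand ((Fx k + Fy k) * D h) := by
    refine twisted_deriv_ext Fexpand (fun f => euler (Fexpand f))
      (fun f => Fexpand ((Fx k + Fy k) * D f)) ?_ ?_ ?_ ?_ ?_ ?_ h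
    · intro a b
      simp only [map_add, euler_add]
    · intro a b
      simp only [map_mul, euler_mul]
    · intro a b
      simp only [hadd, mul_add, map_add]
    · intro a b
      simp only [hmul, map_mul, map_add]
      ring
    · intro c
      have : D (RatFunc.C c) = 0 := hc c
      simp only [this, Fexpand_C, euler_single]
      simp
    · have hX : (RatFunc.X : F2 k) = Fy k := rfl
      simp only [hX, hy, mul_one, Fexpand_Fx_add_Fy, Fexpand_Fy, euler_add, euler_single]
      simp
  have h0 := congrArg (fun f => HahnSeries.coeff f 0) key
  simp only [map_mul, Fexpand_Fx_add_Fy, euler_coeff, HahnSeries.coeff_single_mul] at h0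
  simpa using h0.symm

end Expansion

/-! ### Shifts by integers -/

section Shift

variable {k : Type*} [Field k]

/-- `τ` is the shift `f(x,y) ↦ f(x+n,y)`. -/
def IsShiftBy (n : ℤ) (τ : F2 k ≃+* F2 k) : Prop :=
  (∀ c : k, τ (Fc k c) = Fc k c) ∧ τ (Fy k) = Fy k ∧ τ (Fx k) = Fx k + n

theorem isShiftBy_zpow (σ : RingAut (F2 k)) (hσ : IsShiftX σ) (n : ℤ) :
    IsShiftBy n (σ ^ n) := by
  obtain ⟨hc, hy, hx⟩ := hσ
  induction n with
  | zero => exact ⟨fun c => by simp, by simp, by simp⟩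
  | succ n ih =>
    obtain ⟨ic, iy, ix⟩ := ih
    refine ⟨fun c => ?_, ?_, ?_⟩
    · rw [zpow_add_one, RingAut.mul_apply, hc, ic]
    · rw [zpow_add_one, RingAut.mul_apply, hy, iy]
    · rw [zpow_add_one, RingAut.mul_apply, hx, map_add, ix, map_one]
      push_cast
      ring
  | pred n ih =>
    obtain ⟨ic, iy, ix⟩ := ih
    have hinv : ∀ a b : F2 k, σ a = b → σ⁻¹ b = a := by
      rintro a _ rfl
      rw [← RingAut.mul_apply, inv_mul_cancel, RingAut.one_apply]
    refine ⟨fun c => ?_, ?_, ?_⟩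
    · rw [zpow_sub_one, RingAut.mul_apply, hinv _ _ (hc c), ic]
    · rw [zpow_sub_one, RingAut.mul_apply, hinv _ _ hy, iy]
    · have : σ⁻¹ (Fx k) = Fx k - 1 := hinv _ _ (by rw [map_sub, hx, map_one]; ring)
      rw [zpow_sub_one, RingAut.mul_apply, this, map_sub, ix, map_one]
      push_cast
      ring

/-- A shift restricts to an endomorphism of the subfield `k(x)`. -/
theorem IsShiftBy.exists_restrict {n : ℤ} {τ : F2 k ≃+* F2 k} (hτ : IsShiftBy n τ) :
    ∃ s : RatFunc k →+* RatFunc k, (∀ c, τ (RatFunc.C c) = RatFunc.C (s c)) ∧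
      s RatFunc.X = RatFunc.X + (n : RatFunc k) := by
  obtain ⟨hc, _, hx⟩ := hτ
  have hmem : ∀ c : RatFunc k, ∃ d : RatFunc k, RatFunc.C d = τ (RatFunc.C c) := by
    intro c
    let S : Subfield (RatFunc k) :=
      (RatFunc.C (K := RatFunc k)).fieldRange.comap
        ((τ : F2 k →+* F2 k).comp (RatFunc.C (K := RatFunc k)))
    have : c ∈ S := by
      apply mem_subfield_of_gen S
      · intro a
        exact ⟨RatFunc.C a, (hc a).symm⟩
      · refine ⟨RatFunc.X + (n : RatFunc k), ?_⟩
        change _ = τ (Fx k)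
        rw [hx, map_add, map_intCast]
        rfl
    exact this
  have hinj : Function.Injective (RatFunc.C (K := RatFunc k)) := RingHom.injective _
  choose s hs using hmem
  refine ⟨⟨⟨⟨s, ?_⟩, ?_⟩, ?_, ?_⟩, fun c => (hs c).symm, ?_⟩
  · exact hinj (by rw [hs]; simp)
  · intro a b
    exact hinj (by simp [hs])
  · exact hinj (by change RatFunc.C (s 0) = _; rw [hs]; simp)
  · intro a b
    exact hinj (by change RatFunc.C (s (a + b)) = RatFunc.C (s a + s b); simp [hs])
  · refine hinj ?_
    change RatFunc.C (s RatFunc.X) = _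
    rw [hs, map_add, map_intCast]
    exact hx

theorem IsShiftBy.comm_deriv {n : ℤ} {τ : F2 k ≃+* F2 k} (hτ : IsShiftBy n τ)
    {D : F2 k → F2 k} (hD : IsDerivY D) (h : F2 k) : τ (D h) = D (τ h) := by
  obtain ⟨s, hs, -⟩ := hτ.exists_restrict
  obtain ⟨hadd, hmul, hc, hy⟩ := hD
  have hc' : ∀ c, D (RatFunc.C c) = 0 := hc
  refine twisted_deriv_ext (τ : F2 k →+* F2 k) (fun f => τ (D f)) (fun f => D (τ f))
    ?_ ?_ ?_ ?_ ?_ ?_ h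
  · intro a b
    simp only [hadd, map_add]
  · intro a b
    simp only [hmul, map_add, map_mul, RingHom.coe_coe]
  · intro a b
    simp only [hadd, map_add]
  · intro a b
    simp only [hmul, map_mul, RingHom.coe_coe]
  · intro c
    simp only [hs, hc', map_zero]
  · change τ (D (Fy k)) = D (τ (Fy k))
    rw [hτ.2.1, hy, map_one]

theorem IsShiftBy.map_algebraMap {n : ℤ} {τ : F2 k ≃+* F2 k} (hτ : IsShiftBy n τ)
    {s : RatFunc k →+* RatFunc k} (hs : ∀ c, τ (RatFunc.C c) = RatFunc.C (s c))
    (p : (RatFunc k)[X]) :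
    τ (algebraMap _ (F2 k) p) = algebraMap _ (F2 k) (p.map s) := by
  induction p using Polynomial.induction_on' with
  | add p q hp hq => simp only [map_add, Polynomial.map_add, hp, hq]
  | monomial m a =>
    have hy : τ (RatFunc.X : F2 k) = RatFunc.X := hτ.2.1
    simp only [← Polynomial.C_mul_X_pow_eq_monomial, Polynomial.map_mul, Polynomial.map_pow,
      Polynomial.map_C, Polynomial.map_X, map_mul, map_pow, RatFunc.algebraMap_C,
      RatFunc.algebraMap_X, hs, hy]

/-- The residue at `y = -x` of the shift of `p/q` by `n` vanishes unless `y = n - x` is a root of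
`q`. -/
theorem IsShiftBy.coeff_expand_div {n : ℤ} {τ : F2 k ≃+* F2 k} (hτ : IsShiftBy n τ)
    (p q : (RatFunc k)[X]) (hq : q.eval ((n : RatFunc k) - RatFunc.X) ≠ 0) :
    (Fexpand (τ (algebraMap _ (F2 k) p / algebraMap _ (F2 k) q))).coeff (-1) = 0 := by
  obtain ⟨s, hs, hsX⟩ := hτ.exists_restrict
  rw [map_div₀, hτ.map_algebraMap hs, hτ.map_algebraMap hs]
  apply _root_.coeff_expand_div
  have hX : (-RatFunc.X : RatFunc k) = s ((n : RatFunc k) - RatFunc.X) := by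
    rw [map_sub, map_intCast, hsX]
    ring
  rw [hX, Polynomial.eval_map_apply]
  exact (map_ne_zero s).2 hq

theorem finite_residue_support [CharZero k] (σ : RingAut (F2 k)) (hσ : IsShiftX σ) (g : F2 k) :
    {n : ℤ | (Fexpand ((σ ^ n) g)).coeff (-1) ≠ 0}.Finite := by
  induction g using RatFunc.induction_on with
  | f p q hq =>
    have : CharZero (RatFunc k) := charZero_of_injective_algebraMap (algebraMap k _).injective
    have hfin : {n : ℤ | q.IsRoot ((n : RatFunc k) - RatFunc.X)}.Finite :=
      (Polynomial.finite_setOfPred_isRoot hq).preimage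
        (f := fun n : ℤ => (n : RatFunc k) - RatFunc.X)
        (fun a _ b _ h => by simpa using h)
    refine hfin.subset fun n hn => ?_
    by_contra hroot
    exact hn ((isShiftBy_zpow σ hσ n).coeff_expand_div p q hroot)

/-- The residue at `y = -x` of `1/(x+n+y)`. -/
theorem IsShiftBy.coeff_expand_inv [CharZero k] {n : ℤ} {τ : F2 k ≃+* F2 k}
    (hτ : IsShiftBy n τ) :
    (Fexpand (τ (Fx k + Fy k)⁻¹)).coeff (-1) = if n = 0 then 1 else 0 := by
  split_ifs with hn
  · subst hn
    have hfix : τ (Fx k + Fy k) = Fx k + Fy k := by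
      rw [map_add, hτ.2.1, hτ.2.2]
      simp
    rw [map_inv₀, map_inv₀, hfix, Fexpand_Fx_add_Fy]
    simp
  · have : CharZero (RatFunc k) := charZero_of_injective_algebraMap (algebraMap k _).injective
    have h := hτ.coeff_expand_div 1 (Polynomial.C RatFunc.X + Polynomial.X)
      (by simpa using hn)
    simpa [Fx, Fy, RatFunc.algebraMap_C, RatFunc.algebraMap_X] using h

end Shift

/-- Example 1, first part: the rational function `1/(x+y)` is not exact
with respect to `(Δ_x, D_y)`: there are no `g, h ∈ k(x,y)` with
`1/(x+y) = Δ_x(g) + D_y(h)`. -/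
theorem stmt17 {k : Type*} [Field k] [CharZero k]
    (σx : F2 k ≃+* F2 k) (hσx : IsShiftX σx)
    (Dy : F2 k → F2 k) (hDy : IsDerivY Dy) :
    ¬ ∃ g h : F2 k, (Fx k + Fy k)⁻¹ = (σx g - g) + Dy h := by
  rintro ⟨g, h, heq⟩
  let σ : RingAut (F2 k) := σx
  let r : ℤ → RatFunc k := fun n => (Fexpand ((σ ^ n) g)).coeff (-1)
  have hr : r.support.Finite := finite_residue_support σ hσx g
  have hr' : (fun n => r (n + 1)).support.Finite :=
    hr.preimage (f := fun n : ℤ => n + 1) (fun a _ b _ hab => by simpa using hab)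
  have hstep : ∀ n : ℤ, (if n = 0 then (1 : RatFunc k) else 0) = r (n + 1) - r n := by
    intro n
    have hn : IsShiftBy n (σ ^ n) := isShiftBy_zpow σ hσx n
    have hσg : (σ ^ n) (σx g) = (σ ^ (n + 1)) g := by
      rw [zpow_add_one, RingAut.mul_apply]
    rw [← hn.coeff_expand_inv, heq, map_add, map_sub, hn.comm_deriv hDy, hσg, map_add, map_sub,
      HahnSeries.coeff_add, HahnSeries.coeff_sub, coeff_expand_deriv Dy hDy, add_zero]
  have hsum : ∑ᶠ n : ℤ, (if n = 0 then (1 : RatFunc k) else 0) = 0 := by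
    rw [finsum_congr hstep, finsum_sub_distrib hr' hr, sub_eq_zero]
    exact finsum_comp_equiv (Equiv.addRight (1 : ℤ)) (f := r)
  rw [finsum_eq_single _ (0 : ℤ) (fun n hn => if_neg hn), if_pos rfl] at hsum
  exact one_ne_zero hsum
end
end

section
/- The rational function 1/(xy) ∈ k(x,y) is not exact with respect to (Δ_x, D_y): there do not exist g, h ∈ k(x,y) with 1/(xy) = Δ_x(g) + D_y(h). In particular, there is no g ∈ k(x,y) with 1/x = Δ_x(g). -/
/-!
Expand elements of `k(x,y) = k(x)(y)` as Laurent series in `y` over `k(x)` and take the residue, the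
coefficient of `y⁻¹`. The shift `σ_x` acts coefficientwise (`laurent_shift`), and `D_y` only produces
elements of residue zero (`residue_deriv`). Hence `1/(xy) = Δ_x(g) + D_y(h)` forces
`1/x = r(x + 1) - r(x)` in `k(x)`, where `r` is the residue of `g`.

This is impossible (`inv_X_not_summable`): away from `0` the poles of `r` at integers would propagate
from `a` to `a + 1` and back, so having finitely many poles `r` has none at any integer, whereas `1/x`
has a pole at `0`.

The second claim follows from the first: if `1/x = Δ_x(g)`, then `1/(xy) = Δ_x(g/y)`.
-/

open Polynomial

noncomputable section

variable (k : Type*) [Field k] [CharZero k]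

variable {k}

/-! ### Summation of `1/x` in `k(x)` -/

/-- The equation `1/x = r(x + 1) - r(x)` for `r = p/q` in lowest terms, with denominators cleared.
At `a ≠ 0` the left-hand side is regular, so `r` has a pole at both or neither of `a` and `a + 1`.
Since `q` has finitely many roots, `r` has no pole at any integer, which contradicts the pole of
`1/x` at `0`. -/
theorem no_poly_solution {k : Type*} [Field k] [CharZero k] (p q : k[X]) (hpq : IsCoprime p q)
    (hq : q ≠ 0)
    (h : X * (p.comp (X + 1) * q - p * q.comp (X + 1)) = q * q.comp (X + 1)) : False := by
  have ev : ∀ a : k, a * (p.eval (a + 1) * q.eval a - p.eval a * q.eval (a + 1))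
      = q.eval a * q.eval (a + 1) := fun a => by
    simpa using congrArg (Polynomial.eval a) h
  have cop : ∀ a : k, q.eval a = 0 → p.eval a ≠ 0 := fun a h0 h1 => by
    obtain ⟨u, v, huv⟩ := hpq
    simpa [h0, h1] using congrArg (Polynomial.eval a) huv
  -- Descends from large positive integers to `1`.
  have up : ∀ n : ℕ, q.eval ((n : k) + 1 + 1) ≠ 0 → q.eval ((n : k) + 1) ≠ 0 := fun n h1 h0 => by
    have := ev ((n : k) + 1)
    simp [h0, h1, cop _ h0, Nat.cast_add_one_ne_zero] at this
  -- Ascends from large negative integers to `0`.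
  have down : ∀ n : ℕ, q.eval (-((n : k) + 1)) ≠ 0 → q.eval (-(n : k)) ≠ 0 := fun n h1 h0 => by
    have := ev (-((n : k) + 1))
    rw [show -((n : k) + 1) + 1 = -(n : k) by ring] at this
    simp only [h0, mul_zero, sub_zero, mul_eq_zero, neg_eq_zero, Nat.cast_add_one_ne_zero, h1,
      cop _ h0, or_self] at this
  have fin : (q.rootSet k).Finite := Set.toFinite _
  have big : ∀ f : ℕ → k, Function.Injective f → ∃ n, q.eval (f n) ≠ 0 := fun f hf => by
    by_contra! hc
    refine Set.infinite_range_of_injective hf (fin.subset ?_)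
    rintro _ ⟨n, rfl⟩
    simpa [Polynomial.mem_rootSet, hq] using hc n
  have q1 : q.eval 1 ≠ 0 := by
    obtain ⟨n, hn⟩ := big (fun n => (n : k) + 1) fun a b hab => by simpa using hab
    induction n with
    | zero => simpa using hn
    | succ n ih => exact ih (up n (by simpa using hn))
  have q0 : q.eval 0 ≠ 0 := by
    obtain ⟨n, hn⟩ := big (fun n => -(n : k)) fun a b hab => by simpa using hab
    induction n with
    | zero => simpa using hn
    | succ n ih => exact ih (down n (by simpa using hn))
  have := ev 0
  simp [q0, q1] at this

/-- The shift `r(x) ↦ r(x + 1)` on `k(x)`. -/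
def shiftK (k : Type*) [Field k] : RatFunc k →+* RatFunc k :=
  RatFunc.mapRingHom (Polynomial.compRingHom (X + 1 : k[X]))
    (nonZeroDivisors_le_comap_nonZeroDivisors_of_injective _ (by
      intro a b hab
      have := congrArg (fun p : k[X] => p.comp (X - 1)) hab
      simpa [Polynomial.comp_assoc] using this))

theorem shiftK_algebraMap {k : Type*} [Field k] (p : k[X]) :
    shiftK k (algebraMap _ _ p) = algebraMap _ _ (p.comp (X + 1)) := by
  simp [shiftK, RatFunc.coe_mapRingHom_eq_coe_map, RatFunc.map_apply]

theorem inv_X_not_summable {k : Type*} [Field k] [CharZero k] (r : RatFunc k) :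
    (RatFunc.X : RatFunc k)⁻¹ ≠ shiftK k r - r := by
  intro h
  refine no_poly_solution r.num r.denom (RatFunc.isCoprime_num_denom r) r.denom_ne_zero ?_
  apply RatFunc.algebraMap_injective k
  have hd : algebraMap k[X] (RatFunc k) r.denom ≠ 0 :=
    RatFunc.algebraMap_ne_zero r.denom_ne_zero
  have hd' : algebraMap k[X] (RatFunc k) (r.denom.comp (X + 1)) ≠ 0 := by
    rw [← shiftK_algebraMap]; exact (_root_.map_ne_zero _).2 hd
  have hX : (RatFunc.X : RatFunc k) ≠ 0 := RatFunc.X_ne_zero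
  rw [← RatFunc.num_div_denom r, map_div₀, shiftK_algebraMap, shiftK_algebraMap] at h
  simp only [map_mul, map_sub, RatFunc.algebraMap_X]
  field_simp at h
  linear_combination -h

/-! ### Laurent expansion in `y` and residues at `y = 0` -/

/-- Coefficientwise application of a ring homomorphism to Laurent series. -/
def laurentMap {K : Type*} [Field K] (s : K →+* K) : LaurentSeries K →+* LaurentSeries K where
  toFun f := HahnSeries.map f s
  map_one' := by ext n; simp [HahnSeries.coeff_one, apply_ite s]
  map_zero' := by ext n; simp
  map_add' f g := by ext n; simp
  map_mul' f g := HahnSeries.map_mul (s : K →ₙ+* K)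

theorem ratFunc_hom_ext {K L : Type*} [Field K] [Field L] {f g : RatFunc K →+* L}
    (hC : ∀ c, f (RatFunc.C c) = g (RatFunc.C c)) (hX : f RatFunc.X = g RatFunc.X) : f = g := by
  have hp : f.comp (algebraMap K[X] (RatFunc K)) = g.comp (algebraMap K[X] (RatFunc K)) := by
    apply Polynomial.ringHom_ext
    · intro a; simpa using hC a
    · simpa using hX
  ext r
  rw [← RatFunc.num_div_denom r, map_div₀, map_div₀]
  have e := fun p => RingHom.congr_fun hp p
  simp only [RingHom.comp_apply] at e
  rw [e, e]

open scoped RatFunc in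
/-- The expansion of a rational function over `K` as a Laurent series at `0`; it is applied with
`K = k(x)` to the variable `y`. -/
def laurent (K : Type*) [Field K] : RatFunc K →+* LaurentSeries K := algebraMap _ _

theorem laurent_poly {K : Type*} [Field K] (p : K[X]) :
    laurent K (algebraMap _ _ p) = HahnSeries.ofPowerSeries ℤ K (p : PowerSeries K) :=
  (RatFunc.coe_coe p).symm

theorem laurent_X {K : Type*} [Field K] : laurent K RatFunc.X = HahnSeries.single 1 1 :=
  RatFunc.coe_X

theorem laurent_C {K : Type*} [Field K] (c : K) :
    laurent K (RatFunc.C c) = HahnSeries.C c := by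
  rw [← RatFunc.algebraMap_C, laurent_poly]; simp

theorem shift_C {k : Type*} [Field k] [CharZero k]
    (σx : F2 k ≃+* F2 k) (hσx : IsShiftX σx) (c : RatFunc k) :
    σx (RatFunc.C c) = RatFunc.C (shiftK k c) := by
  have : (σx : F2 k →+* F2 k).comp RatFunc.C = RatFunc.C.comp (shiftK k) := by
    apply ratFunc_hom_ext
    · intro a
      have h1 : shiftK k (RatFunc.C a) = RatFunc.C a := by
        rw [← RatFunc.algebraMap_C, shiftK_algebraMap]; simp
      simpa [h1, Fc] using hσx.1 a
    · have h1 : shiftK k RatFunc.X = RatFunc.X + 1 := by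
        rw [← RatFunc.algebraMap_X, shiftK_algebraMap]; simp
      simpa [h1, Fx] using hσx.2.2
  exact RingHom.congr_fun this c

/-- Laurent expansion in `y` turns `σ_x` into the coefficientwise shift of `k(x)`. -/
theorem laurent_shift {k : Type*} [Field k] [CharZero k]
    (σx : F2 k ≃+* F2 k) (hσx : IsShiftX σx) (g : F2 k) :
    laurent (RatFunc k) (σx g) = laurentMap (shiftK k) (laurent (RatFunc k) g) := by
  have : (laurent (RatFunc k)).comp (σx : F2 k →+* F2 k)
      = (laurentMap (shiftK k)).comp (laurent (RatFunc k)) := by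
    apply ratFunc_hom_ext
    · intro c
      simp only [RingHom.comp_apply, RingHom.coe_coe, shift_C σx hσx, laurent_C]
      exact (HahnSeries.map_C _ _).symm
    · have := hσx.2.1
      simp only [Fy] at this
      simp only [RingHom.comp_apply, RingHom.coe_coe, this, laurent_X]
      ext n
      change _ = shiftK k ((HahnSeries.single 1 1 : LaurentSeries (RatFunc k)).coeff n)
      by_cases hn : n = 1 <;> simp [hn]
  exact RingHom.congr_fun this g

theorem deriv_poly {k : Type*} [Field k] [CharZero k]
    (Dy : F2 k → F2 k) (hDy : IsDerivY Dy) (p : (RatFunc k)[X]) :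
    Dy (algebraMap _ _ p) = algebraMap _ _ (derivative p) := by
  obtain ⟨hadd, hmul, hC, hX⟩ := hDy
  simp only [Fy, FKx] at hC hX
  induction p using Polynomial.induction_on with
  | C a => simp [hC]
  | add p q hp hq => simp [hadd, hp, hq]
  | monomial n a ih =>
    rw [pow_succ, ← mul_assoc, map_mul, hmul, ih, RatFunc.algebraMap_X, hX]
    simp only [derivative_mul, derivative_X, map_add, map_mul, RatFunc.algebraMap_X, map_one]
    ring

/-- A `y`-derivative has residue zero at `y = 0`. Writing `h = w / y ^ m` with `w` regular at `0` and
expanding to a power series `u`, one has `y ^ (m + 1) * D h = y * D w - m * w`, whose coefficient of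
`y ^ m` is `m * u_m - m * u_m = 0`. -/
theorem residue_deriv {k : Type*} [Field k] [CharZero k]
    (Dy : F2 k → F2 k) (hDy : IsDerivY Dy) (h : F2 k) :
    (laurent (RatFunc k) (Dy h)).coeff (-1) = 0 := by
  have hpoly := deriv_poly Dy hDy
  obtain ⟨q0, hq, hndvd⟩ := Polynomial.exists_eq_pow_rootMultiplicity_mul_and_not_dvd
    h.denom h.denom_ne_zero 0
  generalize Polynomial.rootMultiplicity 0 h.denom = m at hq
  simp only [map_zero, sub_zero] at hq hndvd
  have hc : PowerSeries.constantCoeff (q0 : PowerSeries (RatFunc k)) ≠ 0 := by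
    rwa [Polynomial.X_dvd_iff, ← Polynomial.constantCoeff_coe] at hndvd
  have hq0 : q0 ≠ 0 := by rintro rfl; simp at hndvd
  have hq0' := RatFunc.algebraMap_ne_zero hq0
  have hy : (RatFunc.X : F2 k) ≠ 0 := RatFunc.X_ne_zero
  set w : F2 k := RatFunc.X ^ m * h with hw
  have hw1 : algebraMap _ _ q0 * w = algebraMap _ (F2 k) h.num := by
    have := RatFunc.num_div_denom h
    rw [hq, map_mul, map_pow, RatFunc.algebraMap_X] at this
    rw [hw]
    conv_lhs => rw [← this]
    field_simp
  set u : PowerSeries (RatFunc k) := (h.num : PowerSeries (RatFunc k)) * (q0 : PowerSeries _)⁻¹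
    with hu
  have hqq : (q0 : PowerSeries (RatFunc k)) * (q0 : PowerSeries _)⁻¹ = 1 :=
    PowerSeries.mul_inv_cancel _ hc
  have hu1 : (q0 : PowerSeries (RatFunc k)) * u = h.num := by
    rw [hu]; linear_combination (h.num : PowerSeries (RatFunc k)) * hqq
  have hne : HahnSeries.ofPowerSeries ℤ (RatFunc k) (q0 : PowerSeries (RatFunc k)) ≠ 0 := by
    rw [← laurent_poly]; exact (_root_.map_ne_zero _).2 hq0'
  have hwu : laurent _ w = HahnSeries.ofPowerSeries ℤ (RatFunc k) u := by
    apply mul_left_cancel₀ hne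
    rw [← map_mul, hu1, ← laurent_poly, ← laurent_poly, ← map_mul, hw1]
  have hDw : laurent _ (Dy w) =
      HahnSeries.ofPowerSeries ℤ (RatFunc k) (PowerSeries.derivative (RatFunc k) u) := by
    have e1 := congrArg (fun z => laurent _ (Dy z)) hw1
    simp only [hDy.2.1, hpoly, map_add, map_mul, laurent_poly, hwu] at e1
    have e2 := congrArg (fun z => HahnSeries.ofPowerSeries ℤ (RatFunc k)
      (PowerSeries.derivative (RatFunc k) z)) hu1
    simp only [Derivation.leibniz, smul_eq_mul, PowerSeries.derivative_coe, map_add, map_mul] at e2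
    apply mul_left_cancel₀ hne
    linear_combination e1 - e2
  have hXm : Dy (RatFunc.X ^ m) * RatFunc.X = (m : F2 k) * RatFunc.X ^ m := by
    have := hpoly (X ^ m)
    simp only [map_pow, RatFunc.algebraMap_X] at this
    rw [this]
    cases m with
    | zero => simp
    | succ n =>
      rw [derivative_X_pow]
      simp only [map_natCast, map_mul, map_pow, RatFunc.algebraMap_X, Nat.add_sub_cancel]
      ring
  have key : RatFunc.X ^ (m + 1) * Dy h = RatFunc.X * Dy w - (m : F2 k) * w := by
    rw [hw, hDy.2.1]
    linear_combination (-h) * hXm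
  have key2 := congrArg (fun z => (laurent (RatFunc k) z).coeff (m : ℤ)) key
  have e3 : laurent (RatFunc k) (RatFunc.X * Dy w - (m : F2 k) * w) =
      HahnSeries.ofPowerSeries ℤ (RatFunc k)
        (PowerSeries.X * PowerSeries.derivative (RatFunc k) u - (m : PowerSeries (RatFunc k)) * u) := by
    simp [hDw, hwu, laurent_X]
  have e4 : laurent (RatFunc k) (RatFunc.X ^ (m + 1)) =
      HahnSeries.single ((m : ℤ) + 1) 1 := by
    rw [map_pow, laurent_X, HahnSeries.single_pow]; simp
  simp only [e3, map_mul, e4] at key2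
  have e5 := HahnSeries.coeff_single_mul_add (r := (1 : RatFunc k))
    (x := laurent (RatFunc k) (Dy h)) (a := -1) (b := (m : ℤ) + 1)
  rw [show -1 + ((m : ℤ) + 1) = m by ring, one_mul, key2] at e5
  rw [← e5, HahnSeries.ofPowerSeries_apply_coeff]
  cases m with
  | zero => simp
  | succ n =>
    rw [map_sub, PowerSeries.coeff_succ_X_mul, PowerSeries.coeff_derivative,
      ← map_natCast (PowerSeries.C (R := RatFunc k)), PowerSeries.coeff_C_mul]
    push_cast; ring

/-- Example 1, second part: the rational function `1/(xy)` is not exact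
with respect to `(Δ_x, D_y)`: there are no `g, h ∈ k(x,y)` with
`1/(xy) = Δ_x(g) + D_y(h)`; in particular, there is no `g ∈ k(x,y)` with
`1/x = Δ_x(g)`. -/
theorem stmt18 {k : Type*} [Field k] [CharZero k]
    (σx : F2 k ≃+* F2 k) (hσx : IsShiftX σx)
    (Dy : F2 k → F2 k) (hDy : IsDerivY Dy) :
    (¬ ∃ g h : F2 k, (Fx k * Fy k)⁻¹ = (σx g - g) + Dy h) ∧
    (¬ ∃ g : F2 k, (Fx k)⁻¹ = σx g - g) := by
  have main : ¬ ∃ g h : F2 k, (Fx k * Fy k)⁻¹ = (σx g - g) + Dy h := by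
    rintro ⟨g, h, e⟩
    apply inv_X_not_summable ((laurent (RatFunc k) g).coeff (-1))
    have e1 := congrArg (fun z => (laurent (RatFunc k) z).coeff (-1)) e
    simp only [map_add, map_sub, laurent_shift σx hσx, HahnSeries.coeff_add, HahnSeries.coeff_sub,
      residue_deriv Dy hDy, add_zero] at e1
    have e2 : laurent (RatFunc k) (Fx k * Fy k)⁻¹ = HahnSeries.single (-1) (RatFunc.X)⁻¹ := by
      rw [Fx, Fy, map_inv₀, map_mul, laurent_C, laurent_X, HahnSeries.C_apply,
        HahnSeries.single_mul_single, HahnSeries.inv_single]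
      simp
    rw [e2, HahnSeries.coeff_single_same] at e1
    exact e1
  refine ⟨main, ?_⟩
  rintro ⟨g, e⟩
  refine main ⟨g * (Fy k)⁻¹, 0, ?_⟩
  have hD0 : Dy 0 = 0 := by simpa using hDy.2.2.1 0
  rw [hD0, map_mul, map_inv₀, hσx.2.1, mul_inv, e]
  ring
end
end

section
/- Let q ∈ k \ {0}, q ≠ 1. Then in k(x,y) the identity 1/(xy) = Δ_{x,q}( q/((1−q)·x·y) ) holds; in particular 1/(xy) is exact with respect to (Δ_{x,q}, Δ_y). By contrast, if q is not a root of unity, the rational function 1/(x+y) is not exact with respect to (Δ_{x,q}, Δ_y). -/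
/-!
The identity for `1/(xy)` is a direct computation. For the non-exactness of `1/(x+y)`, take the
residue at `y = ∞`, i.e. the coefficient of `y⁻¹` (`IsRes`). It is additive, invariant under the
shift `y ↦ y + 1` (`IsRes.shift`), and commutes with field endomorphisms acting on the
coefficients (`IsRes.coeffMap`). If `1/(x+y) = (τ g - g) + (σ h - h)`, taking residues therefore
gives an `a ∈ k(x)` with `a(qx) - a(x) = 1`. Such an `a` does not exist (`no_qshift_antidiff`):
writing `a = P + r/d` with `P` a polynomial and `r/d` proper, the polynomial `P(qx) - P(x) - 1` is
a proper fraction, hence zero, yet its constant term is `-1`.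
-/

open Polynomial

noncomputable section

variable (k : Type*) [Field k] [CharZero k]

variable {k}

/-! ### The residue at infinity -/

/-- `IsRes f c` says that `c` is the coefficient of `y⁻¹` in the expansion of `f ∈ K(y)` at
`y = ∞` (up to sign, the residue there). It is encoded by a decomposition `f = P + r/d` with `P` a
polynomial, `d` monic of degree `n + 1`, and `c` the coefficient of degree `n` of `r`, where
`deg r ≤ n`; the fraction `r/d` need not be reduced. -/
def IsRes {K : Type*} [Field K] (f : RatFunc K) (c : K) : Prop :=
  ∃ (P r d : K[X]) (n : ℕ), d.Monic ∧ d.natDegree = n + 1 ∧ r.natDegree ≤ n ∧ r.coeff n = c ∧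
    f = algebraMap K[X] (RatFunc K) P +
      algebraMap K[X] (RatFunc K) r / algebraMap K[X] (RatFunc K) d

section Residue

variable {K : Type*} [Field K]

/-- Euclidean division of the numerator by the denominator. -/
theorem exists_poly_add_proper (f : RatFunc K) : ∃ P r d : K[X], d.Monic ∧ r.degree < d.degree ∧
    f = algebraMap K[X] (RatFunc K) P +
      algebraMap K[X] (RatFunc K) r / algebraMap K[X] (RatFunc K) d := by
  have hm := RatFunc.monic_denom f
  refine ⟨f.num /ₘ f.denom, f.num %ₘ f.denom, f.denom, hm, degree_modByMonic_lt _ hm, ?_⟩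
  have h0 := RatFunc.algebraMap_ne_zero hm.ne_zero
  conv_lhs => rw [← RatFunc.num_div_denom f]
  conv_lhs => rw [← modByMonic_add_div f.num f.denom]
  rw [map_add, map_mul]
  field_simp
  ring

theorem IsRes.exists (f : RatFunc K) : ∃ c, IsRes f c := by
  obtain ⟨P, r, d, hd, hr, hf⟩ := exists_poly_add_proper f
  -- Multiplying numerator and denominator by `X` makes the denominator nonconstant.
  refine ⟨(r * X).coeff d.natDegree, P, r * X, d * X, d.natDegree, hd.mul monic_X,
    natDegree_mul_X hd.ne_zero, ?_, rfl, ?_⟩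
  · by_cases h : r = 0
    · simp [h]
    · rw [natDegree_mul_X h]
      exact natDegree_lt_natDegree h hr
  · have hX := RatFunc.algebraMap_ne_zero (K := K) X_ne_zero
    rw [hf, map_mul, map_mul, mul_div_mul_right _ _ hX]

theorem IsRes.add {f g : RatFunc K} {a b : K} (hf : IsRes f a) (hg : IsRes g b) :
    IsRes (f + g) (a + b) := by
  obtain ⟨P, r, d, n, hd, hdn, hr, rfl, rfl⟩ := hf
  obtain ⟨Q, s, e, m, he, hem, hs, rfl, rfl⟩ := hg
  have hd0 := RatFunc.algebraMap_ne_zero hd.ne_zero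
  have he0 := RatFunc.algebraMap_ne_zero he.ne_zero
  refine ⟨P + Q, r * e + d * s, d * e, n + m + 1, hd.mul he, ?_, ?_, ?_, ?_⟩
  · rw [hd.natDegree_mul he]; omega
  · refine (natDegree_add_le _ _).trans (max_le ?_ ?_)
    · exact natDegree_mul_le.trans (by omega)
    · exact natDegree_mul_le.trans (by omega)
  · rw [coeff_add]
    congr 1
    · have := coeff_mul_add_eq_of_natDegree_le hr hem.le
      rw [show n + m + 1 = n + (m + 1) by omega, this, ← hem, he.coeff_natDegree, mul_one]
    · have := coeff_mul_add_eq_of_natDegree_le hdn.le hs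
      rw [show n + m + 1 = (n + 1) + m by omega, this, ← hdn, hd.coeff_natDegree, one_mul]
  · simp only [map_add, map_mul]
    field_simp
    ring

theorem IsRes.neg {f : RatFunc K} {a : K} (hf : IsRes f a) : IsRes (-f) (-a) := by
  obtain ⟨P, r, d, n, hd, hdn, hr, rfl, rfl⟩ := hf
  exact ⟨-P, -r, d, n, hd, hdn, by simpa using hr, by simp, by simp only [map_neg]; ring⟩

theorem IsRes.sub {f g : RatFunc K} {a b : K} (hf : IsRes f a) (hg : IsRes g b) :
    IsRes (f - g) (a - b) := by
  simpa only [sub_eq_add_neg] using hf.add hg.neg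

/-- The sum of a polynomial and a proper fraction vanishes only if both summands do. -/
theorem proper_eq_zero {P r d : K[X]} (hr : r.degree < d.degree)
    (h : algebraMap K[X] (RatFunc K) P +
      algebraMap K[X] (RatFunc K) r / algebraMap K[X] (RatFunc K) d = 0) : P = 0 ∧ r = 0 := by
  have hd : d ≠ 0 := by rintro rfl; simp at hr
  have hd0 := RatFunc.algebraMap_ne_zero hd
  have h1 : P * d + r = 0 := by
    apply RatFunc.algebraMap_injective K
    rw [map_add, map_mul, map_zero]
    field_simp at h
    linear_combination h
  have hP : P = 0 := by
    by_contra hP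
    have h2 : r = -(P * d) := by linear_combination h1
    rw [h2, degree_neg, degree_mul, degree_eq_natDegree hP, degree_eq_natDegree hd] at hr
    norm_cast at hr
    omega
  exact ⟨hP, by simpa [hP] using h1⟩

theorem IsRes.eq_zero {c : K} (h : IsRes (0 : RatFunc K) c) : c = 0 := by
  obtain ⟨P, r, d, n, hd, hdn, hr, rfl, h⟩ := h
  have hlt : r.degree < d.degree := degree_lt_degree (by omega)
  simp [(proper_eq_zero hlt h.symm).2]

theorem IsRes.unique {f : RatFunc K} {a b : K} (ha : IsRes f a) (hb : IsRes f b) : a = b := by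
  have := ha.sub hb
  rw [sub_self] at this
  exact sub_eq_zero.mp this.eq_zero

theorem isRes_inv_X_add_C (a : K) : IsRes (RatFunc.C a + RatFunc.X)⁻¹ 1 := by
  refine ⟨0, 1, X + C a, 0, monic_X_add_C a, by simp, by simp, by simp, ?_⟩
  simp [add_comm]

theorem IsRes.coeffMap {f : RatFunc K} {a : K} (hf : IsRes f a) (τ : RatFunc K →+* RatFunc K)
    (t : K →+* K) (hC : ∀ c, τ (RatFunc.C c) = RatFunc.C (t c)) (hX : τ RatFunc.X = RatFunc.X) :
    IsRes (τ f) (t a) := by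
  obtain ⟨P, r, d, n, hd, hdn, hr, rfl, rfl⟩ := hf
  have key : τ.comp (algebraMap K[X] (RatFunc K)) =
      (algebraMap K[X] (RatFunc K)).comp (mapRingHom t) := by
    ext <;> simp [hC, hX]
  have key' (p : K[X]) : τ (algebraMap K[X] (RatFunc K) p) =
      algebraMap K[X] (RatFunc K) (p.map t) := RingHom.congr_fun key p
  refine ⟨P.map t, r.map t, d.map t, n, hd.map t, by simpa using hdn, by simpa using hr,
    by simp, ?_⟩
  simp only [map_add, map_div₀, key']

theorem IsRes.shift {f : RatFunc K} {a : K} (hf : IsRes f a) (σ : RatFunc K →+* RatFunc K)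
    (hC : ∀ c, σ (RatFunc.C c) = RatFunc.C c) (hX : σ RatFunc.X = RatFunc.X + 1) :
    IsRes (σ f) a := by
  obtain ⟨P, r, d, n, hd, hdn, hr, rfl, rfl⟩ := hf
  have key : σ.comp (algebraMap K[X] (RatFunc K)) =
      (algebraMap K[X] (RatFunc K)).comp (compRingHom (X + C 1)) := by
    ext <;> simp [hC, hX]
  have key' (p : K[X]) : σ (algebraMap K[X] (RatFunc K) p) =
      algebraMap K[X] (RatFunc K) (p.comp (X + C 1)) := RingHom.congr_fun key p
  have hdeg (p : K[X]) : (p.comp (X + C 1)).natDegree = p.natDegree := by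
    rw [natDegree_comp, natDegree_X_add_C, mul_one]
  refine ⟨P.comp (X + C 1), r.comp (X + C 1), d.comp (X + C 1), n, hd.comp_X_add_C 1,
    by rw [hdeg, hdn], by rwa [hdeg], ?_, ?_⟩
  · rcases hr.lt_or_eq with h | rfl
    · rw [coeff_eq_zero_of_natDegree_lt h, coeff_eq_zero_of_natDegree_lt (by rwa [hdeg])]
    · rw [← taylor_apply, coeff_taylor_natDegree, leadingCoeff]
  · simp only [map_add, map_div₀, key']

end Residue

/-! ### The `q`-shift on `k(x)` -/

section QShift

variable {k : Type*} [Field k]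

theorem ratFunc_ringHom_ext {L : Type*} [Field L] {φ ψ : RatFunc k →+* L}
    (hC : ∀ c, φ (RatFunc.C c) = ψ (RatFunc.C c)) (hX : φ RatFunc.X = ψ RatFunc.X) : φ = ψ := by
  apply IsLocalization.ringHom_ext (nonZeroDivisors k[X])
  ext
  · simp [hC]
  · simp [hX]

theorem comp_qX_injective {q : k} (hq : q ≠ 0) :
    Function.Injective (compRingHom (C q * X : k[X])) := by
  rw [injective_iff_map_eq_zero]
  intro p hp
  have hp' : p.comp (C q * X) = 0 := hp
  have h : (p.comp (C q * X)).comp (C q⁻¹ * X) = p := by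
    rw [comp_assoc, mul_comp, C_comp, X_comp, ← mul_assoc, ← C_mul, mul_inv_cancel₀ hq, C_1,
      one_mul, comp_X]
  rw [← h, hp', zero_comp]

/-- The field endomorphism `a(x) ↦ a(qx)` of `k(x)`. -/
def qShift (q : k) (hq : q ≠ 0) : RatFunc k →+* RatFunc k :=
  RatFunc.mapRingHom (compRingHom (C q * X : k[X]))
    (nonZeroDivisors_le_comap_nonZeroDivisors_of_injective _ (comp_qX_injective hq))

theorem qShift_algebraMap (q : k) (hq : q ≠ 0) (p : k[X]) :
    qShift q hq (algebraMap k[X] (RatFunc k) p) =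
      algebraMap k[X] (RatFunc k) (p.comp (C q * X)) := by
  have h := RatFunc.map_apply_div (compRingHom (C q * X : k[X]))
    (nonZeroDivisors_le_comap_nonZeroDivisors_of_injective _ (comp_qX_injective hq)) p 1
  simpa [qShift, RatFunc.coe_mapRingHom_eq_coe_map] using h

theorem qShift_C (q : k) (hq : q ≠ 0) (c : k) : qShift q hq (RatFunc.C c) = RatFunc.C c := by
  rw [← RatFunc.algebraMap_C, qShift_algebraMap, C_comp]

theorem qShift_X (q : k) (hq : q ≠ 0) :
    qShift q hq RatFunc.X = RatFunc.C q * RatFunc.X := by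
  rw [← RatFunc.algebraMap_X, qShift_algebraMap, X_comp, map_mul, RatFunc.algebraMap_C]

theorem no_qshift_antidiff (q : k) (hq : q ≠ 0) (a : RatFunc k) : qShift q hq a - a ≠ 1 := by
  intro h
  obtain ⟨P, r, d, hd, hr, rfl⟩ := exists_poly_add_proper a
  have hdeg (p : k[X]) : (p.comp (C q * X)).degree = p.degree := by
    by_cases hp : p = 0
    · simp [hp]
    have hp' : p.comp (C q * X) ≠ 0 := fun h => hp (comp_qX_injective hq (by simpa using h))
    rw [degree_eq_natDegree hp, degree_eq_natDegree hp', natDegree_comp, natDegree_C_mul_X q hq,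
      mul_one]
  have hd' : d.comp (C q * X) ≠ 0 := by
    rw [← degree_ne_bot, hdeg, degree_ne_bot]; exact hd.ne_zero
  have hd0 := RatFunc.algebraMap_ne_zero hd.ne_zero
  have hd0' := RatFunc.algebraMap_ne_zero hd'
  simp only [map_add, map_div₀, qShift_algebraMap] at h
  have hlt : (r.comp (C q * X) * d - r * d.comp (C q * X)).degree <
      (d.comp (C q * X) * d).degree := by
    have hb : d.degree ≠ ⊥ := degree_ne_bot.mpr hd.ne_zero
    refine (degree_sub_le _ _).trans_lt (max_lt ?_ ?_) <;> simp only [degree_mul, hdeg]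
    · exact WithBot.add_lt_add_right hb hr
    · exact WithBot.add_lt_add_right hb hr
  have h0 := (proper_eq_zero (P := P.comp (C q * X) - P - 1) hlt (by
    simp only [map_sub, map_mul, map_one]
    field_simp at h ⊢
    linear_combination h)).1
  have := congrArg (eval 0) h0
  simp [eval_comp] at this

end QShift

/-! ### The two claims about exactness -/

theorem inv_xy_eq {k : Type*} [Field k] [CharZero k] (q : k) (hq : q ≠ 0) (hq1 : q ≠ 1)
    (τ : F2 k ≃+* F2 k) (hτ : IsQShiftX q τ) :
    (Fx k * Fy k)⁻¹ = τ (Fc k q * ((1 - Fc k q) * Fx k * Fy k)⁻¹) -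
      Fc k q * ((1 - Fc k q) * Fx k * Fy k)⁻¹ := by
  obtain ⟨hc, hy, hx⟩ := hτ
  have hx0 : Fx k ≠ 0 := by
    simpa [Fx] using RatFunc.X_ne_zero (K := k)
  have hy0 : Fy k ≠ 0 := RatFunc.X_ne_zero
  have hq0 : Fc k q ≠ 0 := (_root_.map_ne_zero _).mpr hq
  have hq1' : 1 - Fc k q ≠ 0 := by
    rw [← map_one (Fc k), ← map_sub]
    exact (_root_.map_ne_zero _).mpr (sub_ne_zero.mpr hq1.symm)
  simp only [map_mul, map_inv₀, map_sub, map_one, hc, hx, hy]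
  field_simp

theorem inv_x_add_y_not_exact {k : Type*} [Field k] [CharZero k] (q : k) (hq : q ≠ 0)
    (τ : F2 k ≃+* F2 k) (hτ : IsQShiftX q τ) (σy : F2 k ≃+* F2 k) (hσy : IsShiftY σy) :
    ¬ ∃ g h : F2 k, (Fx k + Fy k)⁻¹ = (τ g - g) + (σy h - h) := by
  rintro ⟨g, h, e⟩
  obtain ⟨a, ha⟩ := IsRes.exists g
  obtain ⟨b, hb⟩ := IsRes.exists h
  have hτC : (τ : F2 k →+* F2 k).comp RatFunc.C = RatFunc.C.comp (qShift q hq) := by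
    apply ratFunc_ringHom_ext
    · intro c
      simpa [qShift_C, Fc] using hτ.1 c
    · simpa [qShift_X, Fc, Fx] using hτ.2.2
  have hσC : (σy : F2 k →+* F2 k).comp RatFunc.C = RatFunc.C := by
    apply ratFunc_ringHom_ext
    · intro c
      simpa [Fc] using hσy.1 c
    · simpa [Fx] using hσy.2.1
  have h1 : IsRes (τ g) (qShift q hq a) :=
    ha.coeffMap (τ : F2 k →+* F2 k) _ (RingHom.congr_fun hτC) hτ.2.1
  have h2 : IsRes (σy h) b :=
    hb.shift (σy : F2 k →+* F2 k) (RingHom.congr_fun hσC) hσy.2.2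
  have h3 := (h1.sub ha).add (h2.sub hb)
  rw [← e] at h3
  have h4 := h3.unique (isRes_inv_X_add_C RatFunc.X)
  rw [sub_self, add_zero] at h4
  exact no_qshift_antidiff q hq a h4

/-- Example 2: for `q ∈ k \ {0}` with `q ≠ 1`, the identity
`1/(xy) = Δ_{x,q}(q/((1-q)·x·y))` holds in `k(x,y)`; in particular `1/(xy)` is exact with
respect to `(Δ_{x,q}, Δ_y)`. By contrast, if `q` is not a root of unity, then `1/(x+y)`
is not exact with respect to `(Δ_{x,q}, Δ_y)`. -/
theorem stmt19 {k : Type*} [Field k] [CharZero k]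
    (q : k) (hq : q ≠ 0) (hq1 : q ≠ 1)
    (τ : F2 k ≃+* F2 k) (hτ : IsQShiftX q τ)
    (σy : F2 k ≃+* F2 k) (hσy : IsShiftY σy) :
    ((Fx k * Fy k)⁻¹ =
        τ (Fc k q * ((1 - Fc k q) * Fx k * Fy k)⁻¹) -
          Fc k q * ((1 - Fc k q) * Fx k * Fy k)⁻¹) ∧
    (∃ g h : F2 k, (Fx k * Fy k)⁻¹ = (τ g - g) + (σy h - h)) ∧
    (NotRootOfUnity q →
      ¬ ∃ g h : F2 k, (Fx k + Fy k)⁻¹ = (τ g - g) + (σy h - h)) := by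
  have h := inv_xy_eq q hq hq1 τ hτ
  exact ⟨h, ⟨Fc k q * ((1 - Fc k q) * Fx k * Fy k)⁻¹, 0, by rwa [map_zero, sub_zero, add_zero]⟩,
    fun _ => inv_x_add_y_not_exact q hq τ hτ σy hσy⟩
end
end
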